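/- Assume f satisfies (A1)–(A3) and fix χ > 0. There is ε₀ > 0 such that for all 0 < ε < ε₀: if x̂, ŷ ∈ NUE_χ and the ε-charts Ψ_{f̂^{−1}(x̂)}^p and Ψ_{ŷ}^q ε-overlap, then G_{x̂,ŷ} := Ψ_{ŷ}^{−1} ∘ g_{x̂} ∘ Ψ_{x̂} is well-defined on [−10Q_ε(x̂), 10Q_ε(x̂)] and can be written as G_{x̂,ŷ}(t) = A t + h(t) where: (1) |A| < e^{−χ}; (2) |h(0)| < ε(pq)³, |(dh)_0| < ε(pq)³, and Hol_{β/3}(dh) < ε on [−10Q_ε(x̂), 10Q_ε(x̂)]. In particular, G_{x̂,ŷ} is Lipschitz on [−10Q_ε(x̂), 10Q_ε(x̂)] with constant at most e^{−χ/2}. -/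

import Mathlib

open Real MeasureTheory Filter Topology Metric Set

noncomputable section

namespace OneDim

/-- The interval `M = [0, 1/2]`. -/
def Mset : Set ℝ := Set.Icc 0 (1/2)

/-- Data of a piecewise `C^{1+β}` interval map `f : M → M` with discontinuity set `D`,
constants `β ∈ (0,1)`, `a, K > 1`, radius function `r` and inverse branches `g`. -/
structure GoodMap where
  f : ℝ → ℝ
  D : Set ℝ
  β : ℝ
  a : ℝ
  K : ℝ
  r : ℝ → ℝ
  g : ℝ → ℝ → ℝ
  hβ0 : 0 < β
  hβ1 : β < 1
  ha : 1 < a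
  hK : 1 < K
  hmaps : ∀ x ∈ Mset, f x ∈ Mset
  hD : D ⊆ Mset
  hdiff : DifferentiableOn ℝ f (Mset \ D)

namespace GoodMap

/-- The critical set `C = {x ∈ M \ D : df_x = 0}`. -/
def crit (F : GoodMap) : Set ℝ := {x | x ∈ Mset \ F.D ∧ deriv F.f x = 0}

/-- The singular set `S = C ∪ D`. -/
def S (F : GoodMap) : Set ℝ := F.crit ∪ F.D

/-- Distance to the singular set. -/
def dS (F : GoodMap) (x : ℝ) : ℝ := Metric.infDist x F.S

/-- Conditions (A1)–(A3). -/
def SatA (F : GoodMap) : Prop :=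
  ∀ x ∈ Mset, x ∉ F.S → F.f x ∉ F.S →
    (min (F.dS x ^ F.a) (F.dS (F.f x) ^ F.a) < F.r x ∧ F.r x < 1) ∧
    -- (A1)
    (Set.InjOn F.f (Metric.ball x (2 * F.r x)) ∧
      (∀ y ∈ Metric.ball x (2 * F.r x), DifferentiableAt ℝ F.f y) ∧
      F.g x (F.f x) = x ∧
      (∀ z ∈ Metric.ball (F.f x) (2 * F.r x), F.f (F.g x z) = z) ∧
      Set.InjOn (F.g x) (Metric.ball (F.f x) (2 * F.r x)) ∧
      (∀ z ∈ Metric.ball (F.f x) (2 * F.r x), DifferentiableAt ℝ (F.g x) z)) ∧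
    -- (A2)
    ((∀ y ∈ Metric.ball x (2 * F.r x),
        F.dS x ^ F.a ≤ |deriv F.f y| ∧ |deriv F.f y| ≤ F.dS x ^ (-F.a)) ∧
      (∀ z ∈ Metric.ball (F.f x) (2 * F.r x),
        F.dS x ^ F.a ≤ |deriv (F.g x) z| ∧ |deriv (F.g x) z| ≤ F.dS x ^ (-F.a))) ∧
    -- (A3)
    ((∀ y ∈ Metric.ball x (2 * F.r x), ∀ z ∈ Metric.ball x (2 * F.r x),
        |deriv F.f y - deriv F.f z| ≤ F.K * |y - z| ^ F.β) ∧
      (∀ y ∈ Metric.ball (F.f x) (2 * F.r x), ∀ z ∈ Metric.ball (F.f x) (2 * F.r x),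
        |deriv (F.g x) y - deriv (F.g x) z| ≤ F.K * |y - z| ^ F.β))

end GoodMap

/-- Membership in the natural extension space `M̂`. -/
def inMhat (f : ℝ → ℝ) (x : ℤ → ℝ) : Prop :=
  (∀ n, x n ∈ Mset) ∧ ∀ n : ℤ, f (x (n - 1)) = x n

/-- The natural extension map `f̂` (left shift). -/
def fhat (x : ℤ → ℝ) : ℤ → ℝ := fun n => x (n + 1)

/-- Iterate `f̂^k` of the natural extension map, `k ∈ ℤ`. -/
def fhatI (k : ℤ) (x : ℤ → ℝ) : ℤ → ℝ := fun n => x (n + k)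

/-- The metric `d̂(x̂,ŷ) = sup{2^n d(x_n,y_n) : n ≤ 0}` on `M̂`. -/
def dhat (x y : ℤ → ℝ) : ℝ :=
  sSup {t : ℝ | ∃ n : ℤ, n ≤ 0 ∧ t = (2:ℝ) ^ n * |x n - y n|}

/-- The invertible derivative cocycle `d̂f^{(n)}` over `f̂`. -/
def dfhat (f : ℝ → ℝ) (x : ℤ → ℝ) (n : ℤ) : ℝ :=
  if 0 ≤ n then ∏ j ∈ Finset.range n.toNat, deriv f (x (j : ℤ))
  else (∏ j ∈ Finset.range (-n).toNat, deriv f (x (-(j : ℤ) - 1)))⁻¹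

/-- The Pesin parameter `u(x̂)`. -/
def uPes (f : ℝ → ℝ) (χ : ℝ) (x : ℤ → ℝ) : ℝ :=
  Real.sqrt (∑' n : ℕ, Real.exp (2 * (n:ℝ) * χ) * (dfhat f x (-(n:ℤ))) ^ 2)

/-- The Pesin chart `Ψ_{x̂}(t) = t/u(x̂) + x₀`. -/
def Psi (f : ℝ → ℝ) (χ : ℝ) (x : ℤ → ℝ) (t : ℝ) : ℝ := t / uPes f χ x + x 0

/-- The set `NUE_χ`. -/
def NUE (F : GoodMap) (χ : ℝ) : Set (ℤ → ℝ) :=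
  {x | inMhat F.f x ∧ (∀ n, x n ∉ F.S) ∧
    (∃ l > χ, Tendsto (fun n : ℕ => Real.log |dfhat F.f x (n:ℤ)| / (n:ℝ)) atTop (𝓝 l)) ∧
    (∃ l > χ, Tendsto (fun n : ℕ => Real.log |dfhat F.f x (-(n:ℤ))| / (-(n:ℝ))) atTop (𝓝 l))}

/-- `ρ(x̂) = d({x₋₁,x₀,x₁}, S)`. -/
def rho (F : GoodMap) (x : ℤ → ℝ) : ℝ :=
  min (F.dS (x (-1))) (min (F.dS (x 0)) (F.dS (x 1)))

/-- `I_ε = {e^{-εn/3} : n ≥ 0}`. -/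
def Ieps (ε : ℝ) : Set ℝ := {q | ∃ n : ℕ, q = Real.exp (-(ε * n) / 3)}

/-- `Q̃_ε(x̂)`. -/
def Qtilde (F : GoodMap) (χ ε : ℝ) (x : ℤ → ℝ) : ℝ :=
  ε ^ (3 / F.β) *
    min (uPes F.f χ x ^ (-(24 / F.β)))
      (uPes F.f χ (fhatI (-1) x) ^ (-(12 / F.β)) * rho F x ^ (72 * F.a / F.β))

/-- `Q_ε(x̂) = max{q ∈ I_ε : q ≤ Q̃_ε(x̂)}`. -/
def Qeps (F : GoodMap) (χ ε : ℝ) (x : ℤ → ℝ) : ℝ :=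
  sSup {q | q ∈ Ieps ε ∧ q ≤ Qtilde F χ ε x}

/-- The regular set. -/
def Reg (F : GoodMap) : Set (ℤ → ℝ) :=
  {x | inMhat F.f x ∧ (∀ n, x n ∉ F.S) ∧
    Tendsto (fun n : ℕ => Real.log (F.dS (x (n:ℤ))) / (n:ℝ)) atTop (𝓝 0) ∧
    Tendsto (fun n : ℕ => Real.log (F.dS (x (-(n:ℤ)))) / (n:ℝ)) atTop (𝓝 0)}

/-- The set `NUE*_χ`. -/
def NUEstar (F : GoodMap) (χ : ℝ) : Set (ℤ → ℝ) :=
  {x | x ∈ NUE F χ ∧ x ∈ Reg F ∧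
    (∃ nk : ℕ → ℤ, Tendsto nk atTop atBot ∧
      Tendsto (fun k => uPes F.f χ (fhatI (nk k) x)) atTop (𝓝 (uPes F.f χ x))) ∧
    Tendsto (fun n : ℕ => Real.log (uPes F.f χ (fhatI (-(n:ℤ)) x)) / (-(n:ℝ))) atTop (𝓝 0)}

/-- An ε-chart is a pair `(x̂, p)`, representing `Ψ_{x̂}` restricted to `[-p,p]`. -/
structure Chart where
  x : ℤ → ℝ
  p : ℝ

/-- `(x̂, p)` is a genuine ε-chart. -/
def IsChart (F : GoodMap) (χ ε : ℝ) (c : Chart) : Prop :=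
  c.x ∈ NUE F χ ∧ 0 < c.p ∧ c.p ≤ Qeps F χ ε c.x

/-- ε-overlap of two ε-charts. -/
def Overlap (F : GoodMap) (χ ε : ℝ) (c₁ c₂ : Chart) : Prop :=
  Real.exp (-ε) ≤ c₁.p / c₂.p ∧ c₁.p / c₂.p ≤ Real.exp ε ∧
  |c₁.x 0 - c₂.x 0| + |(uPes F.f χ c₁.x)⁻¹ - (uPes F.f χ c₂.x)⁻¹| < (c₁.p * c₂.p) ^ 4

/-- `g_{x̂} = g_{x₋₁}`, the inverse branch of `f` taking `x₀` to `x₋₁`. -/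
def ghat (F : GoodMap) (x : ℤ → ℝ) : ℝ → ℝ := F.g (x (-1))

/-- `G_{x̂} = Ψ_{f̂⁻¹x̂}⁻¹ ∘ g_{x̂} ∘ Ψ_{x̂}`. -/
def Gmap (F : GoodMap) (χ : ℝ) (x : ℤ → ℝ) (t : ℝ) : ℝ :=
  uPes F.f χ (fhatI (-1) x) * (ghat F x (Psi F.f χ x t) - x (-1))

/-- `G_{x̂,ŷ} = Ψ_{ŷ}⁻¹ ∘ g_{x̂} ∘ Ψ_{x̂}`. -/
def Gmap2 (F : GoodMap) (χ : ℝ) (x y : ℤ → ℝ) (t : ℝ) : ℝ :=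
  uPes F.f χ y * (ghat F x (Psi F.f χ x t) - y 0)

/-- `F_{x̂} = Ψ_{f̂x̂}⁻¹ ∘ f ∘ Ψ_{x̂}`. -/
def Fmap (F : GoodMap) (χ : ℝ) (x : ℤ → ℝ) (t : ℝ) : ℝ :=
  uPes F.f χ (fhat x) * (F.f (Psi F.f χ x t) - x 1)

/-- `δ_ε = e^{-εn}` where `n` is the unique positive integer with `e^{-εn} < ε ≤ e^{-ε(n-1)}`. -/
def deltaEps (ε : ℝ) : ℝ :=
  Real.exp (-(ε * ((⌊Real.log (1 / ε) / ε⌋ + 1 : ℤ) : ℝ)))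

/-- Weak edge `v ⤎ w` (from `w = Ψ_{x̂}^p` to `v = Ψ_{ŷ}^q`). -/
def WeakEdge (F : GoodMap) (χ ε : ℝ) (v w : Chart) : Prop :=
  IsChart F χ ε v ∧ IsChart F χ ε w ∧
  Overlap F χ ε ⟨fhatI (-1) w.x, v.p⟩ v ∧
  w.p ≤ Real.exp ε * v.p

/-- Edge `v ← w` (from `w = Ψ_{x̂}^p` to `v = Ψ_{ŷ}^q`). -/
def Edge (F : GoodMap) (χ ε : ℝ) (v w : Chart) : Prop :=
  IsChart F χ ε v ∧ IsChart F χ ε w ∧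
  Overlap F χ ε ⟨fhatI (-1) w.x, v.p⟩ v ∧
  |v.x 1 - w.x 0| < v.p ∧
  Real.exp (-v.p) ≤ uPes F.f χ (fhat v.x) / uPes F.f χ w.x ∧
  uPes F.f χ (fhat v.x) / uPes F.f χ w.x ≤ Real.exp v.p ∧
  w.p = min (Real.exp ε * v.p) (deltaEps ε * Qeps F χ ε w.x)

/-- ε-generalized pseudo-orbit. -/
def IsGPO (F : GoodMap) (χ ε : ℝ) (v : ℤ → Chart) : Prop :=
  ∀ n : ℤ, Edge F χ ε (v n) (v (n + 1))

/-- weak ε-generalized pseudo-orbit. -/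
def IsWeakGPO (F : GoodMap) (χ ε : ℝ) (v : ℤ → Chart) : Prop :=
  ∀ n : ℤ, WeakEdge F χ ε (v n) (v (n + 1))

/-- The range `Ψ_{x̂}([-p,p])` of an ε-chart. -/
def chartRange (F : GoodMap) (χ : ℝ) (c : Chart) : Set ℝ :=
  Psi F.f χ c.x '' Set.Icc (-c.p) c.p

/-- A bi-infinite sequence of ε-charts shadows `x̂ ∈ M̂`. -/
def Shadows (F : GoodMap) (χ : ℝ) (v : ℤ → Chart) (x : ℤ → ℝ) : Prop :=
  inMhat F.f x ∧ ∀ n : ℤ, x n ∈ chartRange F χ (v n)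

/-- `q_ε(x̂) = δ_ε inf{e^{ε|m|} Q_ε(f̂^m x̂) : m ≤ 0}`. -/
def qeps (F : GoodMap) (χ ε : ℝ) (x : ℤ → ℝ) : ℝ :=
  deltaEps ε *
    sInf {t : ℝ | ∃ m : ℤ, m ≤ 0 ∧ t = Real.exp (ε * |(m:ℝ)|) * Qeps F χ ε (fhatI m x)}

/-- Recurrence: some symbol repeats infinitely often in the future and some in the past. -/
def Recurrent {V : Type*} (v : ℤ → V) : Prop :=
  (∃ c, {n : ℤ | 0 < n ∧ v n = c}.Infinite) ∧ ∃ c, {n : ℤ | n < 0 ∧ v n = c}.Infinite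

/-- The distance `d(v,w) = exp(-min{|n| : v_n ≠ w_n})` on sequence spaces. -/
def dSigma {V : Type*} (v w : ℤ → V) : ℝ :=
  sSup {t : ℝ | ∃ n : ℤ, v n ≠ w n ∧ t = Real.exp (-|(n:ℝ)|)}

/-- Sup norm over a set. -/
def supNorm (h : ℝ → ℝ) (I : Set ℝ) : ℝ := sSup ((fun t => |h t|) '' I)

/-- Hölder constant over a set. -/
def holConst (γ : ℝ) (h : ℝ → ℝ) (I : Set ℝ) : ℝ :=
  sSup {r : ℝ | ∃ t ∈ I, ∃ s ∈ I, t ≠ s ∧ r = |h t - h s| / |t - s| ^ γ}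

theorem dfhat_neg (f : ℝ → ℝ) (x : ℤ → ℝ) (n : ℕ) :
    dfhat f x (-(n:ℤ)) = (∏ j ∈ Finset.range n, deriv f (x (-(j : ℤ) - 1)))⁻¹ := by
  unfold dfhat
  rcases Nat.eq_zero_or_pos n with h | h
  · subst h; simp
  · rw [if_neg (by omega)]
    simp

theorem dfhat_succ (f : ℝ → ℝ) (x : ℤ → ℝ) (n : ℕ) :
    dfhat f x (-((n + 1 : ℕ):ℤ)) = (deriv f (x (-1)))⁻¹ * dfhat f (fhatI (-1) x) (-(n:ℤ)) := by
  rw [dfhat_neg, dfhat_neg, Finset.prod_range_succ', mul_inv, mul_comm]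
  congr 1
  · congr 1
    apply Finset.prod_congr rfl
    intro j _
    unfold fhatI
    congr 2
    push_cast
    ring

theorem u_summable (F : GoodMap) (χ : ℝ) (x : ℤ → ℝ) (hx : x ∈ NUE F χ) :
    Summable (fun n : ℕ => Real.exp (2 * (n:ℝ) * χ) * (dfhat F.f x (-(n:ℤ))) ^ 2) := by
  obtain ⟨_, _, _, l, hl, ht⟩ := hx
  have hm : (χ + l) / 2 < l := by linarith
  have hev := ht.eventually (lt_mem_nhds hm)
  have hgeo : Summable (fun n : ℕ => (Real.exp (-(l - χ))) ^ n) :=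
    summable_geometric_of_lt_one (Real.exp_pos _).le (Real.exp_lt_one_iff.mpr (by linarith))
  refine Summable.of_norm_bounded_eventually_nat hgeo ?_
  filter_upwards [hev, eventually_gt_atTop 0] with n hn hn0
  have hnp : (0:ℝ) < n := by exact_mod_cast hn0
  rw [Real.norm_of_nonneg (by positivity)]
  set d := dfhat F.f x (-(n:ℤ)) with hd
  rw [← Real.exp_nat_mul]
  by_cases h0 : d = 0
  · rw [h0]; simp; positivity
  have hlog : Real.log |d| < -(n * ((χ + l) / 2)) := by
    rw [div_neg, lt_neg, div_lt_iff₀ hnp] at hn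
    linarith
  have h1 : |d| ≤ Real.exp (-(n * ((χ + l) / 2))) :=
    ((Real.log_lt_iff_lt_exp (abs_pos.mpr h0)).mp hlog).le
  have h2 : d ^ 2 ≤ Real.exp (-(n * ((χ + l) / 2))) ^ 2 := by
    rw [← sq_abs]
    exact pow_le_pow_left₀ (abs_nonneg _) h1 2
  calc Real.exp (2 * (n:ℝ) * χ) * d ^ 2
      ≤ Real.exp (2 * (n:ℝ) * χ) * Real.exp (-(n * ((χ + l) / 2))) ^ 2 := by gcongr
    _ = Real.exp (n * (-(l - χ))) := by
      rw [← Real.exp_nat_mul, ← Real.exp_add]; congr 1; push_cast; ring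

theorem u_sq (F : GoodMap) (χ : ℝ) (x : ℤ → ℝ) :
    uPes F.f χ x ^ 2 = ∑' n : ℕ, Real.exp (2 * (n:ℝ) * χ) * (dfhat F.f x (-(n:ℤ))) ^ 2 := by
  unfold uPes
  exact Real.sq_sqrt (tsum_nonneg (fun n => by positivity))

theorem u_rec (F : GoodMap) (χ : ℝ) (x : ℤ → ℝ) (hx : x ∈ NUE F χ) :
    uPes F.f χ x ^ 2 = 1 + Real.exp χ ^ 2 * (deriv F.f (x (-1)))⁻¹ ^ 2 *
      uPes F.f χ (fhatI (-1) x) ^ 2 := by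
  rw [u_sq, u_sq, (u_summable F χ x hx).tsum_eq_zero_add, ← tsum_mul_left]
  congr 1
  · simp [dfhat]
  · apply tsum_congr
    intro n
    rw [dfhat_succ, mul_pow, ← Real.exp_nat_mul]
    have : Real.exp (2 * ((n + 1 : ℕ):ℝ) * χ) =
        Real.exp ((2:ℕ) * χ) * Real.exp (2 * (n:ℝ) * χ) := by
      rw [← Real.exp_add]; congr 1; push_cast; ring
    rw [this]; ring

theorem u_ge_one (F : GoodMap) (χ : ℝ) (x : ℤ → ℝ) (hx : x ∈ NUE F χ) :
    1 ≤ uPes F.f χ x := by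
  have h := u_rec F χ x hx
  have h0 : 0 ≤ uPes F.f χ x := Real.sqrt_nonneg _
  have : 0 ≤ Real.exp χ ^ 2 * (deriv F.f (x (-1)))⁻¹ ^ 2 *
      uPes F.f χ (fhatI (-1) x) ^ 2 := by positivity
  nlinarith

theorem dS_pos (F : GoodMap) (hA : F.SatA) (x : ℝ) (hx : x ∈ Mset) (hS : x ∉ F.S)
    (hfS : F.f x ∉ F.S) : 0 < F.dS x := by
  obtain ⟨⟨hr, _⟩, _, ⟨h2, _⟩, _⟩ := hA x hx hS hfS
  rcases (Metric.infDist_nonneg (x := x) (s := F.S)).eq_or_lt with h | h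
  · exfalso
    have h0 : F.dS x = 0 := h.symm
    have hr0 : 0 < F.r x :=
      lt_of_le_of_lt (le_min (Real.rpow_nonneg Metric.infDist_nonneg _)
        (Real.rpow_nonneg Metric.infDist_nonneg _)) hr
    have h3 := (h2 x (Metric.mem_ball_self (by linarith))).2
    have ha := F.ha
    rw [h0, Real.zero_rpow (by linarith)] at h3
    have h4 : deriv F.f x = 0 := abs_eq_zero.mp (le_antisymm h3 (abs_nonneg _))
    apply hS
    by_cases hD : x ∈ F.D
    · exact Or.inr hD
    · exact Or.inl ⟨⟨hx, hD⟩, h4⟩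
  · exact h

theorem dS_le_one (F : GoodMap) (x : ℝ) (hx : x ∈ Mset) : F.dS x ≤ 1 := by
  rcases F.S.eq_empty_or_nonempty with h | ⟨s, hs⟩
  · unfold GoodMap.dS; rw [h]; simp
  · have hsM : s ∈ Mset := by
      rcases hs with h | h
      · exact h.1.1
      · exact F.hD h
    refine (Metric.infDist_le_dist_of_mem hs).trans ?_
    rw [Real.dist_eq, abs_le]
    simp only [Mset, Set.mem_Icc] at hx hsM
    constructor <;> linarith [hx.1, hx.2, hsM.1, hsM.2]

theorem Qeps_nonneg (F : GoodMap) (χ ε : ℝ) (x : ℤ → ℝ) : 0 ≤ Qeps F χ ε x := by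
  apply Real.sSup_nonneg
  rintro q ⟨⟨n, rfl⟩, _⟩
  positivity

theorem rho_nonneg (F : GoodMap) (x : ℤ → ℝ) : 0 ≤ rho F x :=
  le_min Metric.infDist_nonneg (le_min Metric.infDist_nonneg Metric.infDist_nonneg)

theorem u_nonneg (F : GoodMap) (χ : ℝ) (x : ℤ → ℝ) : 0 ≤ uPes F.f χ x := Real.sqrt_nonneg _

theorem Qeps_le (F : GoodMap) (χ ε : ℝ) (hε : 0 < ε) (x : ℤ → ℝ) :
    Qeps F χ ε x ≤ Qtilde F χ ε x := by
  apply Real.sSup_le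
  · rintro q ⟨_, h⟩; exact h
  · unfold Qtilde
    exact mul_nonneg (Real.rpow_nonneg hε.le _) (le_min (Real.rpow_nonneg (u_nonneg F χ x) _)
      (mul_nonneg (Real.rpow_nonneg (u_nonneg F χ _) _) (Real.rpow_nonneg (rho_nonneg F x) _)))

theorem eps_pow_le (F : GoodMap) (ε : ℝ) (hε : 0 < ε) (hε1 : ε < 1) : ε ^ (3 / F.β) ≤ ε ^ 3 := by
  have h := F.hβ0
  have h1 := F.hβ1
  rw [← Real.rpow_natCast]
  apply Real.rpow_le_rpow_of_exponent_ge hε hε1.le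
  rw [le_div_iff₀ h]; push_cast; linarith

theorem Qeps_le1 (F : GoodMap) (χ ε : ℝ) (hε : 0 < ε) (hε1 : ε < 1) (x : ℤ → ℝ)
    (hu : 1 ≤ uPes F.f χ x) : Qeps F χ ε x ≤ ε ^ 3 * (uPes F.f χ x)⁻¹ := by
  have h := F.hβ0
  have h1 := F.hβ1
  refine (Qeps_le F χ ε hε x).trans ?_
  unfold Qtilde
  refine mul_le_mul (eps_pow_le F ε hε hε1) ((min_le_left _ _).trans ?_) ?_ (by positivity)
  · rw [← Real.rpow_neg_one]
    apply Real.rpow_le_rpow_of_exponent_le hu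
    rw [neg_le_neg_iff, le_div_iff₀ h]; linarith
  · exact (le_min (Real.rpow_nonneg (u_nonneg F χ x) _)
      (mul_nonneg (Real.rpow_nonneg (u_nonneg F χ _) _) (Real.rpow_nonneg (rho_nonneg F x) _)))

theorem Qeps_le2 (F : GoodMap) (χ ε : ℝ) (hε : 0 < ε) (x : ℤ → ℝ) :
    Qeps F χ ε x ≤ ε ^ (3 / F.β) * (uPes F.f χ (fhatI (-1) x) ^ (-(12 / F.β)) *
      rho F x ^ (72 * F.a / F.β)) := by
  refine (Qeps_le F χ ε hε x).trans ?_
  unfold Qtilde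
  exact mul_le_mul_of_nonneg_left (min_le_right _ _) (Real.rpow_nonneg hε.le _)

theorem holder_arith (β ε v Q : ℝ) (hβ : 0 < β) (hβ1 : β < 1) (hε : 0 < ε)
    (hv : 1 ≤ v) (hQ0 : 0 ≤ Q) (hQ : Q ≤ ε ^ (3 / β) * v ^ (-(12 / β))) :
    (20 * Q) ^ (2 * β / 3) ≤ 20 * (ε ^ 2 * v⁻¹) := by
  have hv0 : 0 < v := by linarith
  rw [Real.mul_rpow (by norm_num) hQ0]
  have h20 : (20:ℝ) ^ (2 * β / 3) ≤ 20 := by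
    calc (20:ℝ) ^ (2 * β / 3) ≤ 20 ^ (1:ℝ) :=
          Real.rpow_le_rpow_of_exponent_le (by norm_num) (by linarith)
      _ = 20 := by simp
  have h2 : Q ^ (2 * β / 3) ≤ ε ^ 2 * v⁻¹ := by
    calc Q ^ (2 * β / 3) ≤ (ε ^ (3 / β) * v ^ (-(12 / β))) ^ (2 * β / 3) :=
          Real.rpow_le_rpow hQ0 hQ (by positivity)
      _ = ε ^ (2:ℝ) * v ^ (-8:ℝ) := by
          rw [Real.mul_rpow (by positivity) (by positivity), ← Real.rpow_mul hε.le,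
            ← Real.rpow_mul hv0.le]
          congr 2
          · field_simp
          · field_simp; norm_num
      _ ≤ ε ^ 2 * v⁻¹ := by
          rw [Real.rpow_two, ← Real.rpow_neg_one]
          exact mul_le_mul_of_nonneg_left
            (Real.rpow_le_rpow_of_exponent_le hv (by norm_num)) (by positivity)
  exact mul_le_mul h20 h2 (by positivity) (by norm_num)

set_option maxHeartbeats 2000000 in
/-- nonlinear Pesin reduction for `G_{x̂,ŷ}` (Theorem 2.6). -/
theorem nonlinear_pesin_two_charts (F : GoodMap) (hA : F.SatA) (χ : ℝ) (hχ : 0 < χ) :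
    ∃ ε₀ > 0, ∀ ε : ℝ, 0 < ε → ε < ε₀ →
      ∀ x y : ℤ → ℝ, x ∈ NUE F χ → y ∈ NUE F χ → ∀ p q : ℝ,
        IsChart F χ ε ⟨fhatI (-1) x, p⟩ → IsChart F χ ε ⟨y, q⟩ →
        Overlap F χ ε ⟨fhatI (-1) x, p⟩ ⟨y, q⟩ →
        -- well-definedness: `Ψ_{x̂}(R[10Q]) ⊆ E_{x₋₁}`, the domain of `g_{x̂}`
        (∀ t ∈ Set.Icc (-(10 * Qeps F χ ε x)) (10 * Qeps F χ ε x),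
          Psi F.f χ x t ∈ Metric.ball (x 0) (2 * F.r (x (-1)))) ∧
        (∃ A : ℝ, ∃ h : ℝ → ℝ,
          (∀ t ∈ Set.Icc (-(10 * Qeps F χ ε x)) (10 * Qeps F χ ε x),
            Gmap2 F χ x y t = A * t + h t) ∧
          |A| < Real.exp (-χ) ∧
          |h 0| < ε * (p * q) ^ 3 ∧ |deriv h 0| < ε * (p * q) ^ 3 ∧
          holConst (F.β / 3) (deriv h)
            (Set.Icc (-(10 * Qeps F χ ε x)) (10 * Qeps F χ ε x)) < ε) ∧
        (∀ t ∈ Set.Icc (-(10 * Qeps F χ ε x)) (10 * Qeps F χ ε x),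
          ∀ s ∈ Set.Icc (-(10 * Qeps F χ ε x)) (10 * Qeps F χ ε x),
            |Gmap2 F χ x y t - Gmap2 F χ x y s| ≤ Real.exp (-χ / 2) * |t - s|) := by
  have hKK := F.hK
  have hβ0 := F.hβ0
  have hβ1 := F.hβ1
  have hexp : Real.exp (-χ) < Real.exp (-χ / 2) := Real.exp_lt_exp.mpr (by linarith)
  refine ⟨min (1 / 100) (min (1 / (100 * F.K)) ((Real.exp (-χ / 2) - Real.exp (-χ)) / 2)),
    by refine lt_min (by norm_num) (lt_min (by positivity) (by linarith)), ?_⟩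
  intro ε hε hε' x y hx hy p q hcx hcy hov
  obtain ⟨hεa, hεb⟩ := lt_min_iff.mp hε'
  obtain ⟨hεb, hεc⟩ := lt_min_iff.mp hεb
  have hεK : 100 * F.K * ε < 1 := by
    rw [lt_div_iff₀ (by positivity)] at hεb; linarith
  have hε1 : ε < 1 := by linarith
  obtain ⟨hx', hp, hpQ⟩ := hcx
  obtain ⟨-, hq, hqQ⟩ := hcy
  obtain ⟨-, -, hov⟩ := hov
  simp only at hx' hp hpQ hq hqQ hov
  have hu := u_ge_one F χ x hx
  have hv := u_ge_one F χ _ hx'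
  have hw := u_ge_one F χ y hy
  have hrec := u_rec F χ x hx
  have hpQ1 := hpQ.trans (Qeps_le1 F χ ε hε hε1 _ hv)
  have hqQ1 := hqQ.trans (Qeps_le1 F χ ε hε hε1 _ hw)
  have hQ2 := Qeps_le2 F χ ε hε x
  have hQ1 := Qeps_le1 F χ ε hε hε1 x hu
  have hQ0 := Qeps_nonneg F χ ε x
  obtain ⟨⟨hxM, hxf⟩, hxS, -, -⟩ := hx
  have hf1 : F.f (x (-1)) = x 0 := by simpa using hxf 0
  have hf2 : F.f (x 0) = x 1 := by simpa using hxf 1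
  have hf3 : F.f (x 1) = x 2 := by simpa using hxf 2
  have hd1 := dS_pos F hA (x (-1)) (hxM _) (hxS _) (by rw [hf1]; exact hxS _)
  have hd0 := dS_pos F hA (x 0) (hxM _) (hxS _) (by rw [hf2]; exact hxS _)
  have hd2 := dS_pos F hA (x 1) (hxM _) (hxS _) (by rw [hf3]; exact hxS _)
  have hρ0 : 0 < rho F x := lt_min hd1 (lt_min hd0 hd2)
  have hρ1 : rho F x ≤ 1 := (min_le_left _ _).trans (dS_le_one F _ (hxM _))
  obtain ⟨⟨hr, -⟩, ⟨-, hfd, hgx, hfg, -, hgd⟩, -, ⟨-, hgH⟩⟩ :=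
    hA (x (-1)) (hxM _) (hxS _) (by rw [hf1]; exact hxS _)
  rw [hf1] at hr hgx hfg hgd hgH
  have ha := F.ha
  have hρr : rho F x ^ F.a < F.r (x (-1)) := by
    refine lt_of_le_of_lt (le_min ?_ ?_) hr
    · exact Real.rpow_le_rpow hρ0.le (min_le_left _ _) (by linarith)
    · exact Real.rpow_le_rpow hρ0.le ((min_le_right _ _).trans (min_le_left _ _)) (by linarith)
  have hρa : 0 < rho F x ^ F.a := Real.rpow_pos_of_pos hρ0 _
  have hr0 : 0 < F.r (x (-1)) := hρa.trans hρr
  unfold Gmap2 ghat Psi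
  set u := uPes F.f χ x with hu_def
  set v := uPes F.f χ (fhatI (-1) x) with hv_def
  set w := uPes F.f χ y with hw_def
  set Q := Qeps F χ ε x with hQ_def
  set g := F.g (x (-1)) with hg_def
  have hu0 : 0 < u := by linarith
  have hv0 : 0 < v := by linarith
  have hw0 : 0 < w := by linarith
  have hvpow : v ^ (-(12 / F.β)) ≤ 1 :=
    Real.rpow_le_one_of_one_le_of_nonpos hv (by have := div_pos (by norm_num : (0:ℝ) < 12) hβ0; linarith)
  have hvpow0 : 0 < v ^ (-(12 / F.β)) := Real.rpow_pos_of_pos hv0 _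
  have hεpow := eps_pow_le F ε hε hε1
  have hεpow0 : 0 < ε ^ (3 / F.β) := Real.rpow_pos_of_pos hε _
  have hρpow : rho F x ^ (72 * F.a / F.β) ≤ rho F x ^ F.a := by
    apply Real.rpow_le_rpow_of_exponent_ge hρ0 hρ1
    rw [le_div_iff₀ hβ0]; nlinarith
  have hρpow0 : 0 < rho F x ^ (72 * F.a / F.β) := Real.rpow_pos_of_pos hρ0 _
  have hρpow1 : rho F x ^ (72 * F.a / F.β) ≤ 1 :=
    hρpow.trans (Real.rpow_le_one hρ0.le hρ1 (by linarith))
  have hε3 : ε ^ 3 ≤ 1 / 100 :=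
    (pow_lt_self_of_lt_one₀ hε hε1 (by norm_num)).le.trans hεa.le
  -- bounds on Q
  have hQr : 10 * Q < 2 * F.r (x (-1)) := by
    have : Q ≤ 1 / 100 * (1 * rho F x ^ F.a) := by
      refine hQ2.trans ?_
      exact mul_le_mul (hεpow.trans hε3) (mul_le_mul hvpow hρpow hρpow0.le (by norm_num))
        (by positivity) (by norm_num)
    linarith
  have hQ100 : Q ≤ 1 / 100 := by
    refine hQ1.trans ?_
    calc ε ^ 3 * u⁻¹ ≤ 1 / 100 * 1 :=
          mul_le_mul hε3 (inv_le_one_of_one_le₀ hu) (by positivity) (by norm_num)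
      _ = 1 / 100 := by norm_num
  have hQv : Q ≤ ε ^ (3 / F.β) * v ^ (-(12 / F.β)) := by
    refine hQ2.trans ?_
    refine mul_le_mul_of_nonneg_left ?_ hεpow0.le
    exact mul_le_of_le_one_right hvpow0.le hρpow1
  have hball : ∀ t ∈ Set.Icc (-(10 * Q)) (10 * Q),
      t / u + x 0 ∈ Metric.ball (x 0) (2 * F.r (x (-1))) := by
    intro t ht
    rw [Metric.mem_ball, Real.dist_eq, add_sub_cancel_right, abs_div, abs_of_pos hu0]
    refine lt_of_le_of_lt (div_le_self (abs_nonneg _) hu) ?_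
    exact lt_of_le_of_lt (abs_le.mpr ht) hQr
  -- the overlap estimates
  have hpq0 : 0 < p * q := mul_pos hp hq
  have hp1 : p ≤ 1 := by
    refine hpQ1.trans ?_
    calc ε ^ 3 * v⁻¹ ≤ 1 * 1 :=
          mul_le_mul (by linarith) (inv_le_one_of_one_le₀ hv) (by positivity) (by norm_num)
      _ = 1 := by norm_num
  have hq1 : q ≤ 1 := by
    refine hqQ1.trans ?_
    calc ε ^ 3 * w⁻¹ ≤ 1 * 1 :=
          mul_le_mul (by linarith) (inv_le_one_of_one_le₀ hw) (by positivity) (by norm_num)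
      _ = 1 := by norm_num
  have hpq1 : p * q ≤ 1 := mul_le_one₀ hp1 hq.le hq1
  have hwpq : w * (p * q) ≤ ε ^ 3 := by
    calc w * (p * q) ≤ w * (1 * (ε ^ 3 * w⁻¹)) := by gcongr
      _ = ε ^ 3 := by field_simp
  have hε3' : ε ^ 3 < ε := pow_lt_self_of_lt_one₀ hε hε1 (by norm_num)
  have hwpq4 : w * (p * q) ^ 4 < ε * (p * q) ^ 3 := by
    calc w * (p * q) ^ 4 = (w * (p * q)) * (p * q) ^ 3 := by ring
      _ < ε * (p * q) ^ 3 := mul_lt_mul_of_pos_right (by linarith) (by positivity)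
  have hpq3 : (p * q) ^ 3 ≤ 1 := pow_le_one₀ hpq0.le hpq1
  have hx0' : fhatI (-1) x 0 = x (-1) := by simp [fhatI]
  rw [hx0'] at hov
  have hov1 : |x (-1) - y 0| < (p * q) ^ 4 := by linarith [abs_nonneg (v⁻¹ - w⁻¹)]
  have hov2 : |v⁻¹ - w⁻¹| < (p * q) ^ 4 := by linarith [abs_nonneg (x (-1) - y 0)]
  have hwv : w * v⁻¹ ≤ 2 := by
    have h1 : w * (v⁻¹ - w⁻¹) ≤ w * (p * q) ^ 4 :=
      mul_le_mul_of_nonneg_left ((le_abs_self _).trans hov2.le) hw0.le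
    have h2 : w * (v⁻¹ - w⁻¹) = w * v⁻¹ - 1 := by field_simp
    have h3 : ε * (p * q) ^ 3 ≤ 1 := mul_le_one₀ hε1.le (by positivity) hpq3
    linarith
  -- derivative of g at x 0
  have h0ball : x 0 ∈ Metric.ball (x 0) (2 * F.r (x (-1))) := Metric.mem_ball_self (by linarith)
  have hdg : deriv g (x 0) = (deriv F.f (x (-1)))⁻¹ := by
    have h1 : HasDerivAt g (deriv g (x 0)) (x 0) := (hgd _ h0ball).hasDerivAt
    have h2 : HasDerivAt F.f (deriv F.f (x (-1))) (g (x 0)) := by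
      rw [hgx]
      exact (hfd _ (Metric.mem_ball_self (by linarith))).hasDerivAt
    have h3 := h2.comp (x 0) h1
    have h4 : HasDerivAt (F.f ∘ g) 1 (x 0) := by
      refine (hasDerivAt_id (x 0)).congr_of_eventuallyEq ?_
      filter_upwards [Metric.isOpen_ball.mem_nhds h0ball] with z hz
      exact hfg z hz
    exact eq_inv_of_mul_eq_one_right (h3.unique h4)
  set c := deriv g (x 0) with hc_def
  rw [← hdg] at hrec
  have hA1 : |v * c / u| < Real.exp (-χ) := by
    apply abs_lt_of_sq_lt_sq _ (Real.exp_pos _).le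
    rw [Real.exp_neg, div_pow, inv_pow, div_lt_iff₀ (by positivity), hrec]
    have := Real.exp_pos χ
    field_simp
    nlinarith [mul_pos this this]
  -- derivative of G
  have hGd : ∀ t ∈ Set.Icc (-(10 * Q)) (10 * Q),
      HasDerivAt (fun t => w * (g (t / u + x 0) - y 0)) (w * (deriv g (t / u + x 0) / u)) t := by
    intro t ht
    have h1 : HasDerivAt (fun t => t / u + x 0) (1 / u) t :=
      ((hasDerivAt_id t).div_const u).add_const _
    have h2 : HasDerivAt g (deriv g (t / u + x 0)) (t / u + x 0) :=
      (hgd _ (hball t ht)).hasDerivAt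
    have h3 := ((h2.comp t h1).sub_const (y 0)).const_mul w
    rw [mul_one_div] at h3
    exact h3
  have hhd : ∀ t ∈ Set.Icc (-(10 * Q)) (10 * Q),
      deriv (fun t => w * (g (t / u + x 0) - y 0) - v * c / u * t) t =
        w * (deriv g (t / u + x 0) / u) - v * c / u := by
    intro t ht
    have h1 := (hGd t ht).sub ((hasDerivAt_id t).const_mul (v * c / u))
    rw [mul_one] at h1
    exact h1.deriv
  have h0I : (0:ℝ) ∈ Set.Icc (-(10 * Q)) (10 * Q) := ⟨by linarith, by linarith⟩
  have hh0 : |w * (c / u) - v * c / u| < ε * (p * q) ^ 3 := by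
    have h1 : w * (c / u) - v * c / u = (v * c / u) * (w * (v⁻¹ - w⁻¹)) := by
      field_simp
    rw [h1, abs_mul, abs_mul, abs_of_pos hw0]
    have h2 : |v * c / u| ≤ 1 := hA1.le.trans (Real.exp_le_one_iff.mpr (by linarith))
    calc |v * c / u| * (w * |v⁻¹ - w⁻¹|) ≤ 1 * (w * (p * q) ^ 4) := by gcongr
      _ < ε * (p * q) ^ 3 := by linarith
  -- the Hölder estimate
  have hHol : ∀ t ∈ Set.Icc (-(10 * Q)) (10 * Q), ∀ s ∈ Set.Icc (-(10 * Q)) (10 * Q),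
      |w * (deriv g (t / u + x 0) / u) - w * (deriv g (s / u + x 0) / u)| ≤
        ε / 2 * |t - s| ^ (F.β / 3) := by
    intro t ht s hs
    have h1 : w * (deriv g (t / u + x 0) / u) - w * (deriv g (s / u + x 0) / u) =
        w * ((deriv g (t / u + x 0) - deriv g (s / u + x 0)) / u) := by ring
    have h2 := hgH _ (hball t ht) _ (hball s hs)
    have h3 : |t / u + x 0 - (s / u + x 0)| ≤ |t - s| := by
      have : t / u + x 0 - (s / u + x 0) = (t - s) / u := by ring
      rw [this, abs_div, abs_of_pos hu0]
      exact div_le_self (abs_nonneg _) hu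
    have h4 : |t - s| ≤ 20 * Q := by
      rw [abs_le]; constructor <;> linarith [ht.1, ht.2, hs.1, hs.2]
    have h5 : |t - s| ^ F.β = |t - s| ^ (2 * F.β / 3) * |t - s| ^ (F.β / 3) := by
      rw [← Real.rpow_add_of_nonneg (abs_nonneg _) (by positivity) (by positivity)]
      congr 1; ring
    have h6 : |t - s| ^ (2 * F.β / 3) ≤ 20 * (ε ^ 2 * v⁻¹) :=
      (Real.rpow_le_rpow (abs_nonneg _) h4 (by positivity)).trans
        (holder_arith F.β ε v Q hβ0 hβ1 hε hv hQ0 hQv)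
    have h7 : 0 ≤ |t - s| ^ (F.β / 3) := by positivity
    have h8 : |deriv g (t / u + x 0) - deriv g (s / u + x 0)| ≤
        F.K * (20 * (ε ^ 2 * v⁻¹) * |t - s| ^ (F.β / 3)) := by
      refine h2.trans ?_
      refine mul_le_mul_of_nonneg_left ?_ (by linarith)
      refine (Real.rpow_le_rpow (abs_nonneg _) h3 hβ0.le).trans ?_
      rw [h5]
      exact mul_le_mul_of_nonneg_right h6 h7
    rw [h1, abs_mul, abs_div, abs_of_pos hw0, abs_of_pos hu0]
    calc w * (|deriv g (t / u + x 0) - deriv g (s / u + x 0)| / u)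
        ≤ w * (F.K * (20 * (ε ^ 2 * v⁻¹) * |t - s| ^ (F.β / 3))) := by
          refine mul_le_mul_of_nonneg_left ?_ hw0.le
          exact (div_le_self (abs_nonneg _) hu).trans h8
      _ = (w * v⁻¹) * (F.K * 20 * ε ^ 2 * |t - s| ^ (F.β / 3)) := by ring
      _ ≤ 2 * (F.K * 20 * ε ^ 2 * |t - s| ^ (F.β / 3)) :=
          mul_le_mul_of_nonneg_right hwv (by positivity)
      _ = (40 * F.K * ε) * ε * |t - s| ^ (F.β / 3) := by ring
      _ ≤ ε / 2 * |t - s| ^ (F.β / 3) := by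
          refine mul_le_mul_of_nonneg_right ?_ h7
          nlinarith
  refine ⟨hball, ⟨v * c / u, fun t => w * (g (t / u + x 0) - y 0) - v * c / u * t,
    fun t _ => by ring, hA1, ?_, ?_, ?_⟩, ?_⟩
  · have : w * (g (0 / u + x 0) - y 0) - v * c / u * 0 = w * (x (-1) - y 0) := by
      rw [zero_div, zero_add, hgx]; ring
    simp only [this]
    rw [abs_mul, abs_of_pos hw0]
    exact lt_of_le_of_lt (mul_le_mul_of_nonneg_left hov1.le hw0.le) hwpq4
  · rw [hhd 0 h0I, zero_div, zero_add]
    exact hh0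
  · refine lt_of_le_of_lt (b := ε / 2) ?_ (by linarith)
    refine Real.sSup_le ?_ (by linarith)
    rintro r ⟨t, ht, s, hs, hts, rfl⟩
    rw [hhd t ht, hhd s hs, sub_sub_sub_cancel_right]
    have : 0 < |t - s| := abs_pos.mpr (sub_ne_zero.mpr hts)
    rw [div_le_iff₀ (by positivity)]
    exact hHol t ht s hs
  · intro t ht s hs
    have hbd : ∀ z ∈ Set.Icc (-(10 * Q)) (10 * Q),
        ‖w * (deriv g (z / u + x 0) / u)‖ ≤ Real.exp (-χ / 2) := by
      intro z hz
      rw [Real.norm_eq_abs]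
      have h1 := hHol z hz 0 h0I
      rw [zero_div, zero_add, sub_zero] at h1
      have h2 : |z| ^ (F.β / 3) ≤ 1 := by
        apply Real.rpow_le_one (abs_nonneg _) _ (by positivity)
        rw [abs_le]; constructor <;> linarith [hz.1, hz.2]
      have h3 : ε / 2 * |z| ^ (F.β / 3) ≤ ε / 2 * 1 := by gcongr
      have h4 : ε * (p * q) ^ 3 ≤ ε * 1 := by gcongr
      have h5 : w * (deriv g (z / u + x 0) / u) =
          (w * (deriv g (z / u + x 0) / u) - w * (c / u)) +
          (w * (c / u) - v * c / u) + v * c / u := by ring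
      rw [h5]
      refine (abs_add_three _ _ _).trans ?_
      linarith
    have := (convex_Icc (-(10 * Q)) (10 * Q)).norm_image_sub_le_of_norm_hasDerivWithin_le
      (fun z hz => (hGd z hz).hasDerivWithinAt) hbd hs ht
    simpa [Real.norm_eq_abs] using this

end OneDim
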